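/- Let ξ be a solid partition with legs (π¹,π²,π³,π⁴) with π⁴ = ∅, and for i ∈ {1,2,3} let P_i := {a ∈ ℕ⁴ : a_i = 0 and proj_i(a) ∈ π^i}. Then Σ_{□ ∈ ξ_fin} (1 − nlegs(□)) · ( |ξ ∩ S₋(□)| + Σ_{□' ∈ ξ ∩ S₊(□)} nlegs(□') ) + Σ over ordered pairs (i,j) with i ≠ j ∈ {1,2,3} of #{ (a,b,ε) ∈ P_i × P_j × {0,1} : b − a − e_j − e₄ − ε·e_k ∈ ℤ·(1,1,1,1) } ≡ NP₄(ξ) (mod 2), where for each ordered pair (i,j), k denotes the unique element of {1,2,3} \ {i,j}. (This is the combinatorial content of the paper's Proposition comparing the Cao–Kool–Monavari half with the canonical half: the rank of the A-fixed part of the discrepancy character S̄_{1/2} = V̄_{1/2}^{CKM,4} − V̄_{1/2}^{σ,4} is congruent to the Nekrasov–Piazzalunga sign exponent NP₄(ξ) modulo 2.) -/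

import Mathlib

open scoped BigOperators

/-- A subset of `ℕ^d` is downward closed if it contains `p − e` whenever it contains `p`
and `p − e ∈ ℕ^d`, for a standard basis vector `e`. -/
def DownClosed {d : ℕ} (S : Set (Fin d → ℕ)) : Prop :=
  ∀ p ∈ S, ∀ i : Fin d, 0 < p i → Function.update p i (p i - 1) ∈ S

/-- `proj i` deletes the `i`-th coordinate of a point of `ℕ⁴`. -/
def proj (i : Fin 4) (p : Fin 4 → ℕ) : Fin 3 → ℕ := fun j => p (i.succAbove j)

/-- A plane partition is a finite downward closed subset of `ℕ³`. -/
def IsPlanePartition (π : Set (Fin 3 → ℕ)) : Prop := π.Finite ∧ DownClosed π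

/-- A solid partition with legs `(π 0, π 1, π 2, π 3)`: a downward closed subset
`ξ ⊆ ℕ⁴` such that, far enough along the `i`-th axis, membership in `ξ` is governed by
the plane partition `π i`. -/
def IsSolidPartitionWithLegs (π : Fin 4 → Set (Fin 3 → ℕ)) (ξ : Set (Fin 4 → ℕ)) : Prop :=
  (∀ i, IsPlanePartition (π i)) ∧ DownClosed ξ ∧
    ∃ N : ℕ, ∀ i : Fin 4, ∀ p : Fin 4 → ℕ, N ≤ p i → (p ∈ ξ ↔ proj i p ∈ π i)

/-- The number of legs containing a box. -/
noncomputable def nlegs (π : Fin 4 → Set (Fin 3 → ℕ)) (p : Fin 4 → ℕ) : ℕ :=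
  {i : Fin 4 | proj i p ∈ π i}.ncard

/-- `S₋(□) = {□ − (ε₁,ε₂,ε₃,1) − m·(1,1,1,1) : ε ∈ {0,1}³, m ∈ ℕ} ∩ ℕ⁴`. -/
def Sminus (n : Fin 4 → ℕ) : Set (Fin 4 → ℕ) :=
  { x | ∃ ε : Fin 3 → ℕ, (∀ t, ε t ≤ 1) ∧ ∃ m : ℕ,
      ∀ t : Fin 4, (x t : ℤ) =
        (n t : ℤ) - (if h : (t : ℕ) < 3 then (ε ⟨t, h⟩ : ℤ) else 1) - (m : ℤ) }

/-- `S₊(□) = {□ + (ε₁,ε₂,ε₃,0) + m·(1,1,1,1) : ε ∈ {0,1}³, m ∈ ℕ}`. -/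
def Splus (n : Fin 4 → ℕ) : Set (Fin 4 → ℕ) :=
  { x | ∃ ε : Fin 3 → ℕ, (∀ t, ε t ≤ 1) ∧ ∃ m : ℕ,
      ∀ t : Fin 4, x t = n t + (if h : (t : ℕ) < 3 then ε ⟨t, h⟩ else 0) + m }

/-- For distinct `i, j` among the first three coordinates, the remaining element `k` of
`{0,1,2}` (so that `i.val + j.val + k.val = 3`). -/
def restIdx (i j : Fin 4) : Fin 4 := ⟨3 - i.1 - j.1, by omega⟩

/-- The set of triples `(a, b, ε) ∈ P_i × P_j × {0,1}` such that
`b − a − e_j − e₄ − ε·e_k ∈ ℤ·(1,1,1,1)`, where `P_i = {a ∈ ℕ⁴ : a_i = 0, proj_i a ∈ π^i}`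
and `k` is the remaining index of `{1,2,3}`. -/
def pairSet (π : Fin 4 → Set (Fin 3 → ℕ)) (i j : Fin 4) :
    Set ((Fin 4 → ℕ) × (Fin 4 → ℕ) × ℕ) :=
  { q | (q.1 i = 0 ∧ proj i q.1 ∈ π i) ∧ (q.2.1 j = 0 ∧ proj j q.2.1 ∈ π j) ∧
      q.2.2 ≤ 1 ∧ ∃ c : ℤ, ∀ m : Fin 4,
        (q.2.1 m : ℤ) - (q.1 m : ℤ) - (if m = j then 1 else 0) - (if m = 3 then 1 else 0)
          - (q.2.2 : ℤ) * (if m = restIdx i j then 1 else 0) = c }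

lemma even_ncard_of_invol {α : Type*} (S : Set α) (hS : S.Finite) (g : α → α)
    (h1 : ∀ x ∈ S, g x ∈ S) (h2 : ∀ x ∈ S, g (g x) = x) (h3 : ∀ x ∈ S, g x ≠ x) :
    Even S.ncard := by
  classical
  rw [Set.ncard_eq_toFinset_card S hS]
  have h : ∑ x ∈ hS.toFinset, (1 : ZMod 2) = 0 := by
    refine Finset.sum_involution (fun x _ => g x) ?_ ?_ ?_ ?_
    · intro a _; decide
    · intro a ha _; exact h3 a (by simpa using ha)
    · intro a ha; simpa using h1 a (by simpa using ha)
    · intro a ha; exact h2 a (by simpa using ha)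
  rw [Finset.sum_const, nsmul_eq_mul, mul_one] at h
  exact (ZMod.natCast_eq_zero_iff_even).1 h

lemma mem_Sminus_iff (n x : Fin 4 → ℕ) : x ∈ Sminus n ↔
    x 3 + 1 ≤ n 3 ∧ ∀ t : Fin 4, t ≠ 3 →
      (x t + n 3 = n t + x 3 + 1 ∨ x t + n 3 = n t + x 3) := by
  constructor
  · rintro ⟨ε, hε, m, h⟩
    have h0 := h 0; have h1 := h 1; have h2 := h 2; have h3 := h 3
    have e0 := hε 0; have e1 := hε 1; have e2 := hε 2
    simp at h0 h1 h2 h3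
    refine ⟨by omega, ?_⟩
    intro t ht
    fin_cases t
    · simp only [Fin.zero_eta, Fin.mk_one, Fin.reduceFinMk] at *; omega
    · simp only [Fin.zero_eta, Fin.mk_one, Fin.reduceFinMk] at *; omega
    · simp only [Fin.zero_eta, Fin.mk_one, Fin.reduceFinMk] at *
      have : (⟨2, by omega⟩ : Fin 3) = 2 := rfl
      omega
    · exact absurd rfl ht
  · rintro ⟨h3, h⟩
    refine ⟨fun t => n t.castSucc + x 3 + 1 - (x t.castSucc + n 3), ?_, n 3 - 1 - x 3, ?_⟩
    · intro t
      have := h t.castSucc (by fin_cases t <;> decide)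
      simp only
      omega
    · intro t
      by_cases ht : t = 3
      · subst ht; simp; omega
      · have := h t ht
        have hlt : (t : ℕ) < 3 := by
          have : (t : ℕ) ≠ 3 := fun hh => ht (Fin.ext hh)
          omega
        have hc : (⟨(t : ℕ), hlt⟩ : Fin 3).castSucc = t := rfl
        rw [dif_pos hlt]
        simp only [hc]
        omega

lemma mem_Splus_iff (n x : Fin 4 → ℕ) : x ∈ Splus n ↔
    n 3 ≤ x 3 ∧ ∀ t : Fin 4, t ≠ 3 →
      (x t + n 3 = n t + x 3 + 1 ∨ x t + n 3 = n t + x 3) := by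
  constructor
  · rintro ⟨ε, hε, m, h⟩
    have h0 := h 0; have h1 := h 1; have h2 := h 2; have h3 := h 3
    have e0 := hε 0; have e1 := hε 1; have e2 := hε 2
    simp at h0 h1 h2 h3
    refine ⟨by omega, ?_⟩
    intro t ht
    fin_cases t
    · simp only [Fin.zero_eta, Fin.mk_one, Fin.reduceFinMk] at *; omega
    · simp only [Fin.zero_eta, Fin.mk_one, Fin.reduceFinMk] at *; omega
    · simp only [Fin.zero_eta, Fin.mk_one, Fin.reduceFinMk] at *
      have : (⟨2, by omega⟩ : Fin 3) = 2 := rfl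
      omega
    · exact absurd rfl ht
  · rintro ⟨h3, h⟩
    refine ⟨fun t => (x t.castSucc + n 3) - (n t.castSucc + x 3), ?_, x 3 - n 3, ?_⟩
    · intro t
      have := h t.castSucc (by fin_cases t <;> decide)
      simp only
      omega
    · intro t
      by_cases ht : t = 3
      · subst ht; simp; omega
      · have := h t ht
        have hlt : (t : ℕ) < 3 := by
          have : (t : ℕ) ≠ 3 := fun hh => ht (Fin.ext hh)
          omega
        have hc : (⟨(t : ℕ), hlt⟩ : Fin 3).castSucc = t := rfl
        rw [dif_pos hlt]
        simp only [hc]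
        omega

lemma finite_of_bdd (S : Set (Fin 4 → ℕ)) (B : Fin 4 → ℕ) (h : ∀ x ∈ S, ∀ t, x t ≤ B t) :
    S.Finite :=
  (Set.finite_Iic B).subset (fun x hx t => h x hx t)

lemma le_of_mem_Sminus {n x : Fin 4 → ℕ} (h : x ∈ Sminus n) : ∀ t, x t ≤ n t := by
  rw [mem_Sminus_iff] at h
  intro t
  by_cases ht : t = 3
  · subst ht; omega
  · have := h.2 t ht; omega

lemma Sminus_finite (n : Fin 4 → ℕ) : (Sminus n).Finite :=
  finite_of_bdd _ n fun _ hx => le_of_mem_Sminus hx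

/-- Toggling the `i`-th coordinate preserves parity on subsets of the shifted cubes. -/
lemma even_toggle (S : Set (Fin 4 → ℕ)) (hS : S.Finite) (n : Fin 4 → ℕ) (i : Fin 4) (hi : i ≠ 3)
    (hc : ∀ x ∈ S, x i + n 3 = n i + x 3 + 1 ∨ x i + n 3 = n i + x 3)
    (hge : ∀ x ∈ S, n 3 ≤ n i + x 3)
    (htog : ∀ x ∈ S, ∀ v : ℕ, (v + n 3 = n i + x 3 + 1 ∨ v + n 3 = n i + x 3) →
      Function.update x i v ∈ S) : Even S.ncard := by
  refine even_ncard_of_invol S hS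
    (fun x => Function.update x i (2 * (n i + x 3 - n 3) + 1 - x i)) ?_ ?_ ?_
  · intro x hx
    have := hc x hx; have := hge x hx
    exact htog x hx _ (by omega)
  · intro x hx
    have := hc x hx; have := hge x hx
    simp only [Function.update_self, Function.update_of_ne hi.symm, Function.update_idem]
    convert Function.update_eq_self i x using 2
    omega
  · intro x hx h
    have := hc x hx; have := hge x hx
    have h' := congrFun h i
    simp only [Function.update_self] at h'
    omega

lemma Sminus_update {n x : Fin 4 → ℕ} (hx : x ∈ Sminus n) {i : Fin 4} (hi : i ≠ 3) {v : ℕ}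
    (hv : v + n 3 = n i + x 3 + 1 ∨ v + n 3 = n i + x 3) : Function.update x i v ∈ Sminus n := by
  rw [mem_Sminus_iff] at hx ⊢
  rw [Function.update_of_ne hi.symm]
  refine ⟨hx.1, fun t ht => ?_⟩
  by_cases h : t = i
  · subst h; simpa using hv
  · rw [Function.update_of_ne h]; exact hx.2 t ht

lemma Splus_update {n x : Fin 4 → ℕ} (hx : x ∈ Splus n) {i : Fin 4} (hi : i ≠ 3) {v : ℕ}
    (hv : v + n 3 = n i + x 3 + 1 ∨ v + n 3 = n i + x 3) : Function.update x i v ∈ Splus n := by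
  rw [mem_Splus_iff] at hx ⊢
  rw [Function.update_of_ne hi.symm]
  refine ⟨hx.1, fun t ht => ?_⟩
  by_cases h : t = i
  · subst h; simpa using hv
  · rw [Function.update_of_ne h]; exact hx.2 t ht

lemma even_Sminus (n : Fin 4 → ℕ) (i : Fin 4) (hi : i ≠ 3)
    (hge : ∀ x ∈ Sminus n, n 3 ≤ n i + x 3) : Even (Sminus n).ncard :=
  even_toggle _ (Sminus_finite n) n i hi (fun _ hx => ((mem_Sminus_iff n _).1 hx).2 i hi) hge
    (fun _ hx _ hv => Sminus_update hx hi hv)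

lemma even_Sminus_of_not (n : Fin 4 → ℕ) (h : ¬ (n 0 = n 1 ∧ n 1 = n 2 ∧ n 2 < n 3)) :
    Even (Sminus n).ncard := by
  have key : ∃ i : Fin 4, i ≠ 3 ∧ (n 3 ≤ n i ∨ ∃ j : Fin 4, j ≠ 3 ∧ n j < n i) := by
    by_cases h2 : n 3 ≤ n 2
    · exact ⟨2, by decide, Or.inl h2⟩
    by_cases h01 : n 0 < n 1
    · exact ⟨1, by decide, Or.inr ⟨0, by decide, h01⟩⟩
    by_cases h10 : n 1 < n 0
    · exact ⟨0, by decide, Or.inr ⟨1, by decide, h10⟩⟩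
    by_cases h12 : n 1 < n 2
    · exact ⟨2, by decide, Or.inr ⟨1, by decide, h12⟩⟩
    exact ⟨1, by decide, Or.inr ⟨2, by decide, by omega⟩⟩
  obtain ⟨i, hi, hij⟩ := key
  refine even_Sminus n i hi fun x hx => ?_
  rcases hij with hij | ⟨j, hj, hij⟩
  · omega
  · have := ((mem_Sminus_iff n _).1 hx).2 j hj
    omega

lemma odd_Sminus_of (n : Fin 4 → ℕ) (h : n 0 = n 1 ∧ n 1 = n 2 ∧ n 2 < n 3) :
    Odd (Sminus n).ncard := by
  obtain ⟨h01, h12, h23⟩ := h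
  set z : Fin 4 → ℕ := ![0, 0, 0, n 3 - 1 - n 0] with hz
  have hz0 : z 0 = 0 := rfl
  have hz1 : z 1 = 0 := rfl
  have hz2 : z 2 = 0 := rfl
  have hz3 : z 3 = n 3 - 1 - n 0 := rfl
  have hzm : z ∈ Sminus n := by
    rw [mem_Sminus_iff]
    refine ⟨by omega, fun t ht => ?_⟩
    have : t = 0 ∨ t = 1 ∨ t = 2 := by revert ht; revert t; decide
    rcases this with rfl | rfl | rfl <;> omega
  have hne : ∀ x ∈ Sminus n, x ≠ z → n 3 ≤ n 0 + x 3 := by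
    intro x hx hxz
    by_contra hlt
    apply hxz
    rw [mem_Sminus_iff] at hx
    have e0 := hx.2 0 (by decide)
    have e1 := hx.2 1 (by decide)
    have e2 := hx.2 2 (by decide)
    funext t
    have : t = 0 ∨ t = 1 ∨ t = 2 ∨ t = 3 := by revert t; decide
    rcases this with rfl | rfl | rfl | rfl <;> omega
  have hev : Even (Sminus n \ {z}).ncard := by
    refine even_toggle _ ((Sminus_finite n).subset Set.sdiff_subset) n 0 (by decide) ?_ ?_ ?_
    · intro x hx; exact ((mem_Sminus_iff n _).1 hx.1).2 0 (by decide)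
    · intro x hx; exact hne x hx.1 hx.2
    · intro x hx v hv
      refine ⟨Sminus_update hx.1 (by decide) hv, fun hh => ?_⟩
      have h1 := hne x hx.1 hx.2
      have h3 := congrFun hh 3
      rw [Function.update_of_ne (by decide)] at h3
      omega
  rw [← Set.ncard_sdiff_singleton_add_one hzm (Sminus_finite n)]
  exact hev.add_one

lemma DownClosed.mem_of_le {d : ℕ} {S : Set (Fin d → ℕ)} (hS : DownClosed S) :
    ∀ (k : ℕ) (p q : Fin d → ℕ), ∑ i, p i = k → p ∈ S → q ≤ p → q ∈ S := by
  intro k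
  induction k with
  | zero =>
    intro p q hk hp hq
    have : q = p := by
      funext i
      have := (Finset.sum_eq_zero_iff.1 hk) i (Finset.mem_univ i)
      have h2 : q i ≤ p i := hq i
      omega
    rwa [this]
  | succ k ih =>
    intro p q hk hp hq
    by_cases h : q = p
    · rwa [h]
    · obtain ⟨i, hi⟩ : ∃ i, q i < p i := by
        by_contra hcon
        push Not at hcon
        exact h (le_antisymm hq hcon)
      refine ih (Function.update p i (p i - 1)) q ?_ (hS p hp i (by omega)) ?_
      · have e1 := Finset.sum_update_of_mem (Finset.mem_univ i) p (p i - 1)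
        have e2 := Finset.add_sum_erase Finset.univ p (Finset.mem_univ i)
        rw [Finset.sdiff_singleton_eq_erase] at e1
        omega
      · intro t
        by_cases ht : t = i
        · subst ht; simp; omega
        · simpa [Function.update_of_ne ht] using hq t

lemma proj_update (i : Fin 4) (x : Fin 4 → ℕ) (v : ℕ) :
    proj i (Function.update x i v) = proj i x := by
  funext j
  simp [proj, Fin.succAbove_ne]

open Classical in
lemma nlegs_eq_sum (π : Fin 4 → Set (Fin 3 → ℕ)) (p : Fin 4 → ℕ) :
    nlegs π p = ∑ i : Fin 4, if proj i p ∈ π i then 1 else 0 := by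
  rw [nlegs, Set.ncard_eq_toFinset_card', Finset.sum_boole]
  simp

lemma pairSet_empty (π : Fin 4 → Set (Fin 3 → ℕ)) (i j : Fin 4)
    (hi : i ∈ ({0, 1, 2} : Finset (Fin 4))) (hj : j ∈ ({0, 1, 2} : Finset (Fin 4))) (hij : i ≠ j) :
    pairSet π i j = ∅ := by
  rw [Set.eq_empty_iff_forall_notMem]
  rintro ⟨a, b, e⟩ ⟨⟨ha, -⟩, ⟨hb, -⟩, -, c, hc⟩
  have hk : i ≠ restIdx i j ∧ j ≠ restIdx i j ∧ i ≠ 3 ∧ j ≠ 3 := by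
    clear hc ha hb
    revert i j; decide
  have h1 := hc i
  have h2 := hc j
  simp only [if_neg hij, if_neg hk.1, if_neg hk.2.1, if_neg hk.2.2.1, if_neg hk.2.2.2, if_true]
    at h1 h2
  simp only at ha hb
  omega

/-- the combinatorial comparison of the Cao–Kool–Monavari half with the
canonical half: for a solid partition `ξ` with legs `(π¹,π²,π³,π⁴)`, `π⁴ = ∅`,
`Σ_{□ ∈ ξ_fin} (1 − nlegs □)·(|ξ ∩ S₋(□)| + Σ_{□' ∈ ξ ∩ S₊(□)} nlegs □')`
plus `Σ_{(i,j), i ≠ j ∈ {1,2,3}} #(pairSet π i j)` is congruent to `NP₄(ξ)` mod 2. -/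
theorem CKM_half_vs_canonical_half_sign
    (π : Fin 4 → Set (Fin 3 → ℕ)) (ξ : Set (Fin 4 → ℕ))
    (hξ : IsSolidPartitionWithLegs π ξ) (h4 : π 3 = ∅) :
    {p ∈ ξ | nlegs π p ≠ 1}.Finite ∧
    {p ∈ ξ | p 0 = p 1 ∧ p 1 = p 2 ∧ p 2 < p 3}.Finite ∧
    (∀ p : Fin 4 → ℕ, (ξ ∩ Sminus p).Finite ∧ (ξ ∩ Splus p).Finite) ∧
    (∀ i ∈ ({0, 1, 2} : Finset (Fin 4)), ∀ j ∈ ({0, 1, 2} : Finset (Fin 4)), i ≠ j →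
      (pairSet π i j).Finite) ∧
    Int.ModEq 2
      ((∑ᶠ p ∈ {p ∈ ξ | nlegs π p ≠ 1},
          (1 - (nlegs π p : ℤ)) *
            (((ξ ∩ Sminus p).ncard : ℤ) + ∑ᶠ x ∈ ξ ∩ Splus p, (nlegs π x : ℤ)))
        + ∑ i ∈ ({0, 1, 2} : Finset (Fin 4)),
            ∑ j ∈ ({0, 1, 2} : Finset (Fin 4)).erase i, ((pairSet π i j).ncard : ℤ))
      (∑ᶠ p ∈ {p ∈ ξ | p 0 = p 1 ∧ p 1 = p 2 ∧ p 2 < p 3}, (1 - (nlegs π p : ℤ))) := by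
  classical
  obtain ⟨hπ, hdown, N, hN⟩ := hξ
  have hmono : ∀ p q : Fin 4 → ℕ, p ∈ ξ → q ≤ p → q ∈ ξ := fun p q hp hq =>
    hdown.mem_of_le _ p q rfl hp hq
  -- a common bound
  have hbd : ∃ M : ℕ, N ≤ M ∧ ∀ i, ∀ y ∈ π i, ∀ t, y t < M := by
    have hf : (⋃ i, π i).Finite := Set.finite_iUnion fun i => (hπ i).1
    obtain ⟨u, hu⟩ := hf.bddAbove
    refine ⟨N + ∑ t, u t + 1, by omega, fun i y hy t => ?_⟩
    have h1 : y t ≤ u t := hu (Set.mem_iUnion.2 ⟨i, hy⟩) t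
    have h2 : u t ≤ ∑ t, u t := Finset.single_le_sum (fun _ _ => Nat.zero_le _) (Finset.mem_univ t)
    omega
  obtain ⟨M, hNM, hM⟩ := hbd
  have hleg : ∀ (i : Fin 4) (x : Fin 4 → ℕ), proj i x ∈ π i → ∀ t, t ≠ i → x t < M := by
    intro i x hx t ht
    obtain ⟨s, hs⟩ := Fin.exists_succAbove_eq ht
    have := hM i _ hx s
    simpa [proj, hs] using this
  have hlegξ : ∀ (i : Fin 4) (x : Fin 4 → ℕ), proj i x ∈ π i → x ∈ ξ := by
    intro i x hx
    have h1 : Function.update x i (max (x i) N) ∈ ξ := by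
      rw [hN i _ (by simp), proj_update]; exact hx
    refine hmono _ _ h1 fun t => ?_
    by_cases ht : t = i
    · subst ht; simp
    · simp [Function.update_of_ne ht]
  have h3 : ∀ x ∈ ξ, x 3 < M := by
    intro x hx
    by_contra hcon
    have := (hN 3 x (by omega)).1 hx
    rw [h4] at this
    exact this
  have hfin : {p ∈ ξ | nlegs π p ≠ 1}.Finite := by
    refine finite_of_bdd _ (fun _ => M) ?_
    rintro x ⟨hx, hn⟩ t
    by_contra hcon
    simp only [not_le] at hcon
    have ht := (hN t x (by omega)).1 hx
    apply hn
    have : {i : Fin 4 | proj i x ∈ π i} = {t} := by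
      ext i
      simp only [Set.mem_ofPred_eq, Set.mem_singleton_iff]
      constructor
      · intro hi
        by_contra hne
        have := hleg i x hi t (Ne.symm hne)
        omega
      · rintro rfl; exact ht
    rw [nlegs, this, Set.ncard_singleton]
  have hdiag : {p ∈ ξ | p 0 = p 1 ∧ p 1 = p 2 ∧ p 2 < p 3}.Finite := by
    refine finite_of_bdd _ (fun _ => M) ?_
    rintro x ⟨hx, e0, e1, e2⟩ t
    have := h3 x hx
    have ht : t = 0 ∨ t = 1 ∨ t = 2 ∨ t = 3 := by revert t; decide
    rcases ht with rfl | rfl | rfl | rfl <;> omega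
  have hplus : ∀ p, (ξ ∩ Splus p).Finite := by
    intro p
    refine finite_of_bdd _ (fun t => p t + M + 1) ?_
    rintro x ⟨hx, hp⟩ t
    rw [mem_Splus_iff] at hp
    have := h3 x hx
    by_cases ht : t = 3
    · subst ht; omega
    · have := hp.2 t ht; omega
  -- the sum over `Splus` is even
  have heven : ∀ p, Even (∑ᶠ x ∈ ξ ∩ Splus p, (nlegs π x : ℤ)) := by
    intro p
    rw [finsum_mem_eq_finite_toFinset_sum _ (hplus p)]
    simp_rw [nlegs_eq_sum]
    push_cast
    rw [Finset.sum_comm]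
    refine Finset.even_sum _ fun i _ => ?_
    rw [Finset.sum_boole]
    have hEv : Even {x ∈ ξ ∩ Splus p | proj i x ∈ π i}.ncard := by
      by_cases hi : i = 3
      · subst hi; simp [h4]
      · refine even_toggle _ ((hplus p).subset (Set.sep_subset _ _)) p i hi ?_ ?_ ?_
        · rintro x ⟨⟨-, hx⟩, -⟩
          exact ((mem_Splus_iff p x).1 hx).2 i hi
        · rintro x ⟨⟨-, hx⟩, -⟩
          have := ((mem_Splus_iff p x).1 hx).1
          omega
        · rintro x ⟨⟨-, hx⟩, hl⟩ v hv
          have hl' : proj i (Function.update x i v) ∈ π i := by rwa [proj_update]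
          exact ⟨⟨hlegξ i _ hl', Splus_update hx hi hv⟩, hl'⟩
    have hcard : {x ∈ ξ ∩ Splus p | proj i x ∈ π i}.ncard
        = (Finset.filter (fun x => proj i x ∈ π i) (hplus p).toFinset).card := by
      rw [← Set.ncard_coe_finset]
      congr 1
      ext x
      simp
    rw [hcard] at hEv
    exact_mod_cast hEv
  refine ⟨hfin, hdiag, fun p => ⟨(Sminus_finite p).subset Set.inter_subset_right, hplus p⟩, ?_, ?_⟩
  · intro i hi j hj hij
    rw [pairSet_empty π i j hi hj hij]
    exact Set.finite_empty
  have hpair : ∑ i ∈ ({0, 1, 2} : Finset (Fin 4)),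
      ∑ j ∈ ({0, 1, 2} : Finset (Fin 4)).erase i, ((pairSet π i j).ncard : ℤ) = 0 := by
    refine Finset.sum_eq_zero fun i hi => Finset.sum_eq_zero fun j hj => ?_
    rw [Finset.mem_erase] at hj
    rw [pairSet_empty π i j hi hj.2 hj.1.symm]
    simp
  rw [hpair, add_zero, finsum_mem_eq_finite_toFinset_sum _ hfin,
    finsum_mem_eq_finite_toFinset_sum _ hdiag]
  have hR : ∑ p ∈ hdiag.toFinset, (1 - (nlegs π p : ℤ)) = ∑ p ∈ hfin.toFinset,
      (1 - (nlegs π p : ℤ)) * (if p 0 = p 1 ∧ p 1 = p 2 ∧ p 2 < p 3 then 1 else 0) := by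
    simp_rw [mul_ite, mul_one, mul_zero]
    rw [← Finset.sum_filter]
    symm
    apply Finset.sum_subset
    · intro p hp
      simp only [Finset.mem_filter, Set.Finite.mem_toFinset, Set.mem_ofPred_eq] at hp ⊢
      exact ⟨hp.1.1, hp.2⟩
    · intro p hp hp'
      simp only [Finset.mem_filter, Set.Finite.mem_toFinset, Set.mem_ofPred_eq] at hp hp'
      have : nlegs π p = 1 := by
        by_contra hne
        exact hp' ⟨⟨hp.1, hne⟩, hp.2⟩
      simp [this]
  rw [hR, Int.modEq_iff_dvd, ← Finset.sum_sub_distrib]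
  refine Finset.dvd_sum fun p hp => ?_
  rw [← mul_sub]
  apply Dvd.dvd.mul_left
  have hpξ : p ∈ ξ := by
    have : p ∈ {p ∈ ξ | nlegs π p ≠ 1} := by simpa using hp
    exact this.1
  have hint : ξ ∩ Sminus p = Sminus p :=
    Set.inter_eq_right.2 fun x hx => hmono p x hpξ (le_of_mem_Sminus hx)
  rw [hint]
  obtain ⟨r, hr⟩ := heven p
  rw [hr]
  split_ifs with hd
  · obtain ⟨k, hk⟩ := odd_Sminus_of p hd
    rw [hk]; push_cast
    omega
  · obtain ⟨k, hk⟩ := even_Sminus_of_not p hd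
    rw [hk]; push_cast
    omega
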